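/- Let n and k be integers with 1 ≤ k ≤ n−1. A tree with boundary G has the Faber-Krahn property in the class T^{(n,k)} of all trees with boundary with n vertices and k interior vertices if and only if G is a comet, i.e. the tree consisting of a path v₁,…,v_k of k interior vertices in which v_k is additionally adjacent to n−k−1 boundary vertices and v₁ is additionally adjacent to one boundary vertex. Moreover G is then uniquely determined up to isomorphism. -/

import Mathlib

/-!
Common definitions for Faber-Krahn type inequalities for trees
(Bıyıkoğlu–Leydold, "Faber-Krahn Type Inequalities for Trees").

A *tree (graph) with boundary* is a finite simple connected graph in which
boundary vertices are exactly the vertices of degree 1 and interior vertices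
are the vertices of degree ≥ 2; both sets are required to be nonempty.
The Dirichlet operator is the Laplacian restricted to functions vanishing on
the boundary; `dirichletLambda` is its smallest eigenvalue.
-/

open Finset
open scoped Classical

noncomputable section

namespace FK

variable {V : Type*} [Fintype V] [DecidableEq V]

/-- A vertex is a boundary vertex iff it has degree `1`. -/
def IsBoundary (G : SimpleGraph V) (v : V) : Prop := G.degree v = 1

/-- A vertex is an interior vertex iff it has degree at least `2`. -/
def IsInterior (G : SimpleGraph V) (v : V) : Prop := 2 ≤ G.degree v

/-- A tree with boundary: a tree with at least one interior and
one boundary vertex. -/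
def IsTreeWithBoundary (G : SimpleGraph V) : Prop :=
  G.IsTree ∧ (∃ v, IsInterior G v) ∧ (∃ v, IsBoundary G v)

/-- A connected graph with boundary: every vertex is either a boundary vertex
(degree 1) or an interior vertex (degree ≥ 2), both kinds occur, and no edge
joins two boundary vertices. -/
def IsGraphWithBoundary (G : SimpleGraph V) : Prop :=
  G.Connected ∧ (∀ v, IsBoundary G v ∨ IsInterior G v) ∧
    (∃ v, IsInterior G v) ∧ (∃ v, IsBoundary G v) ∧
    (∀ v w, G.Adj v w → IsBoundary G v → ¬ IsBoundary G w)

/-- The finset of interior vertices. -/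
def interiorFinset (G : SimpleGraph V) : Finset V := univ.filter (fun v => IsInterior G v)

/-- The finset of boundary vertices. -/
def boundaryFinset (G : SimpleGraph V) : Finset V := univ.filter (fun v => IsBoundary G v)

/-- The degree sequence of `G`, as a multiset. -/
def degreeMultiset (G : SimpleGraph V) : Multiset ℕ := Finset.univ.val.map (fun v => G.degree v)

/-- The graph Laplacian `Δ = D - A` applied to a function `f : V → ℝ`. -/
def lapApply (G : SimpleGraph V) (f : V → ℝ) (v : V) : ℝ :=
  (G.degree v : ℝ) * f v - ∑ w ∈ G.neighborFinset v, f w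

/-- `f` (vanishing on the boundary, nonzero) is an eigenfunction of the
Dirichlet operator `Δ₀` with eigenvalue `μ`: the eigenvalue equation holds at
every interior vertex. -/
def IsDirichletEigenpair (G : SimpleGraph V) (μ : ℝ) (f : V → ℝ) : Prop :=
  f ≠ 0 ∧ (∀ v, IsBoundary G v → f v = 0) ∧
    ∀ v, IsInterior G v → lapApply G f v = μ * f v

/-- The first (smallest) Dirichlet eigenvalue `λ(G)`. -/
def dirichletLambda (G : SimpleGraph V) : ℝ :=
  sInf {μ : ℝ | ∃ f : V → ℝ, IsDirichletEigenpair G μ f}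

/-- The quadratic form `⟨Δ f, f⟩ = Σ_{(u,v)∈E} (f u - f v)²` of the Laplacian
(each edge counted once). -/
def quadForm (G : SimpleGraph V) (f : V → ℝ) : ℝ :=
  (∑ v, ∑ w ∈ G.neighborFinset v, (f v - f w) ^ 2) / 2

/-- The Rayleigh quotient `R_G(f)`. -/
def rayleigh (G : SimpleGraph V) (f : V → ℝ) : ℝ :=
  quadForm G f / ∑ v, f v ^ 2

/-- `w` is a child of `v` in the tree `G` rooted at `v₀`
(heights are distances from the root `v₀`). -/
def IsChild (G : SimpleGraph V) (v₀ v w : V) : Prop :=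
  G.Adj v w ∧ G.dist v₀ w = G.dist v₀ v + 1

/-- A spiral-like ordering (SLO-ordering) of the vertices of the tree `G`
rooted at `v₀`: a (strict) well-ordering `lt` satisfying (S1)-(S3). -/
def IsSLOOrdering (G : SimpleGraph V) (v₀ : V) (lt : V → V → Prop) : Prop :=
  IsStrictTotalOrder V lt ∧
  (∀ v w, lt v w → G.dist v₀ v ≤ G.dist v₀ w) ∧
  (∀ v₁ v₂ w₁ w₂, lt v₁ v₂ → IsChild G v₀ v₁ w₁ → IsChild G v₀ v₂ w₂ → lt w₁ w₂) ∧
  (∀ v w, lt v w → IsBoundary G v → IsBoundary G w)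

/-- A spiral-like ordering with increasing degrees (SLO*-ordering):
additionally (S4). -/
def IsSLOStarOrdering (G : SimpleGraph V) (v₀ : V) (lt : V → V → Prop) : Prop :=
  IsSLOOrdering G v₀ lt ∧
  ∀ v w, lt v w → IsInterior G v → IsInterior G w → G.degree v ≤ G.degree w

/-- An SLO-tree: a tree with boundary admitting an SLO-ordering. -/
def IsSLOTree (G : SimpleGraph V) : Prop :=
  IsTreeWithBoundary G ∧ ∃ (v₀ : V) (lt : V → V → Prop), IsSLOOrdering G v₀ lt

/-- An SLO*-tree: a tree with boundary admitting an SLO*-ordering. -/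
def IsSLOStarTree (G : SimpleGraph V) : Prop :=
  IsTreeWithBoundary G ∧ ∃ (v₀ : V) (lt : V → V → Prop), IsSLOStarOrdering G v₀ lt

end FK

namespace FK

/-- The comet on `n` vertices with `k` interior vertices: a path
`1, …, k` of interior vertices, with vertex `0` a boundary vertex attached to
vertex `1`, and the `n - k - 1` boundary vertices `k+1, …, n-1` attached to
vertex `k`. -/
def cometGraph (n k : ℕ) : SimpleGraph (Fin n) :=
  SimpleGraph.fromRel (fun i j => (i.val + 1 = j.val ∧ j.val ≤ k) ∨ (i.val = k ∧ k < j.val))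

/-- Membership in the class `T^(n,k)`: trees with boundary with `n` vertices
and `k` interior vertices. -/
def inClassT (k : ℕ) {n : ℕ} (G : SimpleGraph (Fin n)) : Prop :=
  IsTreeWithBoundary G ∧ (interiorFinset G).card = k

/-!
The first Dirichlet eigenfunction can be taken nonnegative, so it has the form `a ∘ r`, where `r`
ranks the interior vertices by `1, …, k` and the boundary by `0`, and `a` is monotone with
`a 0 = 0`. The energy of `a ∘ r` is a quadratic form in the nonnegative increments of `a`, and its
coefficient at the gaps `p` and `q` is the number of edges crossing both gaps, while the norm of
`a ∘ r` does not depend on the tree at all. A forest on `m` vertices has fewer than `m` edges and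
interior degrees are at least `2`; hence in every tree at least `p + 2 - q` edges cross the gaps
`p ≤ q`, `0 < q`, whereas `crossing 0 0` is the number of boundary vertices. The comet, ranked
alternately from both ends of its path, attains all these bounds simultaneously.

A tree that ties with the comet makes `a` an eigenfunction of the comet. If the comet is not a path,
its eigenvalue equation forces `a` to be strictly increasing, so the tree has the crossing numbers
of the comet, and these determine a ranked tree. If there are just two boundary vertices, the tree
is a path.
-/

section Rayleigh

open Matrix SimpleGraph

variable {V : Type*} [Fintype V] {G : SimpleGraph V} {f h : V → ℝ}

lemma lapApply_eq_mulVec (G : SimpleGraph V) (f : V → ℝ) :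
    lapApply G f = G.lapMatrix ℝ *ᵥ f :=
  funext fun v => (lapMatrix_mulVec_apply G v f).symm

lemma quadForm_eq_sum_ite (G : SimpleGraph V) (f : V → ℝ) :
    quadForm G f = (∑ v, ∑ w, if G.Adj v w then (f v - f w) ^ 2 else 0) / 2 := by
  simp only [quadForm, neighborFinset_eq_filter, sum_filter]

lemma quadForm_eq_dotProduct (G : SimpleGraph V) (f : V → ℝ) :
    quadForm G f = f ⬝ᵥ lapApply G f := by
  rw [quadForm_eq_sum_ite, ← lapMatrix_toLinearMap₂', toLinearMap₂'_apply', lapApply_eq_mulVec]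

lemma quadForm_add_smul (G : SimpleGraph V) (f h : V → ℝ) (t : ℝ) :
    quadForm G (f + t • h) = quadForm G f + 2 * t * (h ⬝ᵥ lapApply G f) + t ^ 2 * quadForm G h := by
  have symm : f ⬝ᵥ G.lapMatrix ℝ *ᵥ h = h ⬝ᵥ G.lapMatrix ℝ *ᵥ f := by
    rw [dotProduct_mulVec, ← mulVec_transpose, (isSymm_lapMatrix ℝ G).eq, dotProduct_comm]
  simp only [quadForm_eq_dotProduct, lapApply_eq_mulVec, mulVec_add, mulVec_smul, add_dotProduct,
    dotProduct_add, smul_dotProduct, dotProduct_smul, smul_eq_mul, symm]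
  ring

lemma quadForm_smul (G : SimpleGraph V) (t : ℝ) (f : V → ℝ) :
    quadForm G (t • f) = t ^ 2 * quadForm G f := by
  simp only [quadForm_eq_dotProduct, lapApply_eq_mulVec, mulVec_smul, smul_dotProduct,
    dotProduct_smul, smul_eq_mul]
  ring

lemma quadForm_nonneg (G : SimpleGraph V) (f : V → ℝ) : 0 ≤ quadForm G f :=
  div_nonneg (sum_nonneg fun _ _ => sum_nonneg fun _ _ => sq_nonneg _) two_pos.le

lemma quadForm_abs_le (G : SimpleGraph V) (f : V → ℝ) : quadForm G |f| ≤ quadForm G f := by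
  unfold quadForm
  gcongr ?_ / 2
  exact sum_le_sum fun v _ => sum_le_sum fun w _ =>
    sq_le_sq.2 (abs_abs_sub_abs_le_abs_sub (f v) (f w))

lemma continuous_quadForm (G : SimpleGraph V) : Continuous (quadForm G) := by
  unfold quadForm
  fun_prop

lemma not_isBoundary_of_isInterior {v : V} (hv : IsInterior G v) : ¬ IsBoundary G v := by
  unfold IsBoundary IsInterior at *
  omega

/-- The space of functions vanishing on the boundary, on which the Dirichlet operator acts. -/
def dirichletSpace (G : SimpleGraph V) : Submodule ℝ (V → ℝ) where
  carrier := {f | ∀ v, IsBoundary G v → f v = 0}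
  add_mem' hf hh v hv := by simp [hf v hv, hh v hv]
  zero_mem' _ _ := rfl
  smul_mem' _ _ hf v hv := by simp [hf v hv]

lemma single_mem_dirichletSpace {v : V} (hv : ¬ IsBoundary G v) (c : ℝ) :
    Pi.single v c ∈ dirichletSpace G := by
  intro w hw
  rw [Pi.single_eq_of_ne]
  rintro rfl
  exact hv hw

lemma isCompact_setOf_dotProduct_self_eq_one {ι : Type*} [Fintype ι] :
    IsCompact {f : ι → ℝ | f ⬝ᵥ f = 1} := by
  refine Metric.isCompact_of_isClosed_isBounded
    (isClosed_eq (by unfold dotProduct; fun_prop) continuous_const)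
    ((Metric.isBounded_closedBall (x := 0) (r := 1)).subset fun f (hf : f ⬝ᵥ f = 1) => ?_)
  rw [mem_closedBall_zero_iff, pi_norm_le_iff_of_nonneg zero_le_one]
  intro v
  rw [Real.norm_eq_abs, ← sq_le_one_iff_abs_le_one, ← hf, sq]
  exact single_le_sum (f := fun w => f w * f w) (fun w _ => mul_self_nonneg _) (mem_univ v)

/-- A normalised minimiser of the Rayleigh quotient among the functions vanishing on the boundary,
with minimum `μ`. -/
structure IsRayleighMinimizer (G : SimpleGraph V) (μ : ℝ) (f : V → ℝ) : Prop where
  mem : f ∈ dirichletSpace G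
  dotProduct_self : f ⬝ᵥ f = 1
  quadForm_eq : quadForm G f = μ
  mul_le_quadForm : ∀ h ∈ dirichletSpace G, μ * (h ⬝ᵥ h) ≤ quadForm G h

lemma exists_isRayleighMinimizer (hint : ∃ v, IsInterior G v) :
    ∃ μ f, IsRayleighMinimizer G μ f := by
  obtain ⟨v, hv⟩ := hint
  have hcompact : IsCompact ({f : V → ℝ | f ⬝ᵥ f = 1} ∩ dirichletSpace G) :=
    isCompact_setOf_dotProduct_self_eq_one.inter_right
      (dirichletSpace G).closed_of_finiteDimensional
  obtain ⟨f, ⟨hf1, hfmem⟩, hmin⟩ := hcompact.exists_isMinOn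
    ⟨Pi.single v 1, by simp, single_mem_dirichletSpace (not_isBoundary_of_isInterior hv) 1⟩
    (continuous_quadForm G).continuousOn
  refine ⟨_, f, hfmem, hf1, rfl, fun h hh => ?_⟩
  have hnonneg : 0 ≤ h ⬝ᵥ h := sum_nonneg fun v _ => mul_self_nonneg (h v)
  obtain h0 | hpos := hnonneg.eq_or_lt
  · rw [← h0, mul_zero]
    exact quadForm_nonneg G h
  · have hsqrt : (√(h ⬝ᵥ h))⁻¹ ^ 2 = (h ⬝ᵥ h)⁻¹ := by rw [inv_pow, Real.sq_sqrt hnonneg]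
    have hle : quadForm G f ≤ quadForm G ((√(h ⬝ᵥ h))⁻¹ • h) := by
      refine hmin ⟨?_, (dirichletSpace G).smul_mem _ hh⟩
      change _ ⬝ᵥ _ = (1 : ℝ)
      rw [smul_dotProduct, dotProduct_smul, smul_smul, ← sq, hsqrt, smul_eq_mul,
        inv_mul_cancel₀ hpos.ne']
    rwa [quadForm_smul, hsqrt, ← div_eq_inv_mul, le_div_iff₀ hpos] at hle

lemma IsRayleighMinimizer.lapApply_eq {μ : ℝ} (hf : IsRayleighMinimizer G μ f) {v : V}
    (hv : ¬ IsBoundary G v) : lapApply G f v = μ * f v := by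
  let e : V → ℝ := Pi.single v 1
  have nonneg (t : ℝ) :
      0 ≤ (quadForm G e - μ) * (t * t) + 2 * (lapApply G f v - μ * f v) * t + 0 := by
    have hle := hf.mul_le_quadForm (f + t • e)
      (add_mem hf.mem ((dirichletSpace G).smul_mem t (single_mem_dirichletSpace hv 1)))
    rw [quadForm_add_smul, hf.quadForm_eq] at hle
    have hnorm : (f + t • e) ⬝ᵥ (f + t • e) = 1 + 2 * t * f v + t ^ 2 := by
      simp only [e, add_dotProduct, dotProduct_add, smul_dotProduct, dotProduct_smul, smul_eq_mul,
        hf.dotProduct_self, dotProduct_single_one, single_one_dotProduct, Pi.add_apply,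
        Pi.smul_apply, Pi.single_eq_same]
      ring
    rw [hnorm, single_one_dotProduct] at hle
    linarith
  have hdiscr := discrim_le_zero nonneg
  rw [discrim, mul_zero, sub_zero] at hdiscr
  have := pow_eq_zero_iff two_ne_zero |>.1 (hdiscr.antisymm (sq_nonneg _))
  linarith

lemma quadForm_eq_of_isDirichletEigenpair (hdeg : ∀ v, IsBoundary G v ∨ IsInterior G v) {μ : ℝ}
    (hf : IsDirichletEigenpair G μ f) : quadForm G f = μ * (f ⬝ᵥ f) := by
  rw [quadForm_eq_dotProduct, dotProduct, dotProduct, mul_sum]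
  refine sum_congr rfl fun v _ => ?_
  obtain hv | hv := hdeg v
  · simp [hf.2.1 v hv]
  · rw [hf.2.2 v hv, mul_left_comm]

lemma IsRayleighMinimizer.dirichletLambda_eq {μ : ℝ} (hf : IsRayleighMinimizer G μ f)
    (hdeg : ∀ v, IsBoundary G v ∨ IsInterior G v) : dirichletLambda G = μ := by
  refine IsLeast.csInf_eq ⟨⟨f, ?_, hf.mem, fun v hv =>
    hf.lapApply_eq (not_isBoundary_of_isInterior hv)⟩, ?_⟩
  · rintro rfl
    simpa using hf.dotProduct_self
  · rintro ν ⟨h, heig⟩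
    have hpos : 0 < h ⬝ᵥ h :=
      (sum_nonneg fun v _ => mul_self_nonneg (h v)).lt_of_ne'
        (dotProduct_self_eq_zero.not.2 heig.1)
    have hle : μ * (h ⬝ᵥ h) ≤ ν * (h ⬝ᵥ h) :=
      (hf.mul_le_quadForm h heig.2.1).trans_eq (quadForm_eq_of_isDirichletEigenpair hdeg heig)
    exact le_of_mul_le_mul_right hle hpos

lemma IsRayleighMinimizer.abs {μ : ℝ} (hf : IsRayleighMinimizer G μ f) :
    IsRayleighMinimizer G μ |f| := by
  have hmem : |f| ∈ dirichletSpace G := fun v hv => by simp [hf.mem v hv]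
  have hnorm : |f| ⬝ᵥ |f| = 1 := by
    rw [← hf.dotProduct_self]
    exact sum_congr rfl fun v _ => abs_mul_abs_self (f v)
  refine ⟨hmem, hnorm, le_antisymm ((quadForm_abs_le G f).trans_eq hf.quadForm_eq) ?_,
    hf.mul_le_quadForm⟩
  simpa [hnorm] using hf.mul_le_quadForm _ hmem

lemma exists_isRayleighMinimizer_nonneg (hint : ∃ v, IsInterior G v)
    (hdeg : ∀ v, IsBoundary G v ∨ IsInterior G v) :
    ∃ f, 0 ≤ f ∧ IsRayleighMinimizer G (dirichletLambda G) f := by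
  obtain ⟨μ, f, hf⟩ := exists_isRayleighMinimizer hint
  rw [hf.dirichletLambda_eq hdeg]
  exact ⟨|f|, abs_nonneg f, hf.abs⟩

lemma IsDirichletEigenpair.comp_iso {W : Type*} [Fintype W] {H : SimpleGraph W} {μ : ℝ}
    (hf : IsDirichletEigenpair G μ f) (e : H ≃g G) : IsDirichletEigenpair H μ (f ∘ e) := by
  obtain ⟨hne, hbd, heig⟩ := hf
  refine ⟨fun h0 => hne (funext fun v => by simpa using congrFun h0 (e.symm v)),
    fun v hv => hbd (e v) ((e.degree_eq v).trans hv), fun v hv => ?_⟩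
  rw [Function.comp_apply, ← heig (e v) (hv.trans_eq (e.degree_eq v).symm)]
  simp only [lapApply, e.degree_eq, Function.comp_apply, neighborFinset_eq_filter, sum_filter]
  congr 1
  exact Fintype.sum_equiv e.toEquiv _ _ fun w => by simp [e.map_adj_iff]

lemma dirichletLambda_eq_of_iso {W : Type*} [Fintype W] {H : SimpleGraph W} (e : G ≃g H) :
    dirichletLambda G = dirichletLambda H := by
  unfold dirichletLambda
  congr 1
  ext μ
  exact ⟨fun ⟨f, hf⟩ => ⟨_, hf.comp_iso e.symm⟩, fun ⟨f, hf⟩ => ⟨_, hf.comp_iso e⟩⟩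

end Rayleigh

section Crossing

open SimpleGraph

variable {V : Type*} {G : SimpleGraph V}

lemma card_interedges_eq_sum (G : SimpleGraph V) (S T : Finset V) :
    #(G.interedges S T) = ∑ u ∈ S, ∑ v ∈ T, if G.Adj u v then 1 else 0 := by
  rw [interedges_def, card_filter, sum_product]

lemma card_interedges_comm (G : SimpleGraph V) (S T : Finset V) :
    #(G.interedges S T) = #(G.interedges T S) :=
  have := G.symm
  Rel.card_interedges_comm S T

lemma card_interedges_union_left {S T : Finset V} (hST : Disjoint S T) (U : Finset V) :
    #(G.interedges (S ∪ T) U) = #(G.interedges S U) + #(G.interedges T U) := by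
  simp only [card_interedges_eq_sum, sum_union hST]

lemma card_interedges_self (G : SimpleGraph V) (S : Finset V) :
    #(G.interedges S S) = 2 * #(G.induce (S : Set V)).edgeFinset := by
  rw [← sum_degrees_eq_twice_card_edges, card_interedges_eq_sum]
  simp only [← card_neighborFinset_eq_degree, neighborFinset_eq_filter, card_filter, comap_adj]
  rw [← sum_coe_sort S]
  refine sum_congr rfl fun u _ => ?_
  exact (sum_coe_sort S fun v => if G.Adj u v then 1 else 0).symm

lemma card_edgeFinset_lt_of_isAcyclic [Fintype V] [Nonempty V] [Fintype G.edgeSet]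
    (hG : G.IsAcyclic) :
    #G.edgeFinset < Fintype.card V := by
  obtain ⟨T, hGT, -, hT⟩ := connected_top.exists_isTree_le_of_le_of_isAcyclic le_top hG
  rw [← hT.card_edgeFinset]
  exact Nat.lt_succ_of_le (card_le_card (edgeFinset_mono hGT))

lemma card_interedges_self_add_two_le (hG : G.IsAcyclic) {S : Finset V} (hS : S.Nonempty) :
    #(G.interedges S S) + 2 ≤ 2 * #S := by
  have : Nonempty (S : Set V) := hS.to_subtype
  have hlt : #(G.induce (S : Set V)).edgeFinset < #S :=
    (card_edgeFinset_lt_of_isAcyclic (hG.induce (S : Set V))).trans_eq (by simp)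
  rw [card_interedges_self]
  omega

variable [Fintype V]

lemma card_interedges_univ (G : SimpleGraph V) (S : Finset V) :
    #(G.interedges S univ) = ∑ v ∈ S, G.degree v := by
  simp only [card_interedges_eq_sum, ← card_neighborFinset_eq_degree, neighborFinset_eq_filter,
    card_filter]

lemma two_mul_card_le_card_interedges_self_add_compl {S : Finset V}
    (hdeg : ∀ v ∈ S, 2 ≤ G.degree v) : 2 * #S ≤ #(G.interedges S S) + #(G.interedges Sᶜ S) := by
  rw [← card_interedges_union_left disjoint_compl_right, union_compl, card_interedges_comm,
    card_interedges_univ, mul_comm]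
  exact card_nsmul_le_sum S _ 2 hdeg

lemma two_le_card_interedges_compl (hG : G.IsAcyclic) {S : Finset V} (hS : S.Nonempty)
    (hdeg : ∀ v ∈ S, 2 ≤ G.degree v) : 2 ≤ #(G.interedges Sᶜ S) := by
  have := card_interedges_self_add_two_le hG hS
  have := two_mul_card_le_card_interedges_self_add_compl hdeg
  omega

lemma one_le_card_interedges_compl_insert (hG : G.IsAcyclic) {S : Finset V} (hS : S.Nonempty)
    (hdeg : ∀ v ∈ S, 2 ≤ G.degree v) {z : V} (hz : z ∉ S) :
    1 ≤ #(G.interedges (insert z S)ᶜ S) := by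
  have hdisj : Disjoint {z} S := disjoint_singleton_left.2 hz
  have hinsert : #(G.interedges (insert z S) (insert z S)) =
      #(G.interedges {z} {z}) + 2 * #(G.interedges {z} S) + #(G.interedges S S) := by
    rw [insert_eq, card_interedges_union_left hdisj, card_interedges_comm G {z} (_ ∪ _),
      card_interedges_comm G S (_ ∪ _), card_interedges_union_left hdisj,
      card_interedges_union_left hdisj, card_interedges_comm G S {z}]
    ring
  have hcompl : #(G.interedges Sᶜ S) =
      #(G.interedges {z} S) + #(G.interedges (insert z S)ᶜ S) := by
    rw [← card_interedges_union_left (disjoint_singleton_left.2 (by simp))]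
    congr 2
    ext v
    by_cases hv : v = z <;> simp [hv, hz]
  have hforest := card_interedges_self_add_two_le hG (insert_nonempty z S)
  rw [card_insert_of_notMem hz] at hforest
  have := card_interedges_self_add_two_le hG hS
  have := two_mul_card_le_card_interedges_self_add_compl hdeg
  omega

end Crossing

section TreesWithBoundary

open SimpleGraph

variable {V : Type*} [Fintype V] {G : SimpleGraph V}

lemma mem_boundaryFinset {v : V} : v ∈ boundaryFinset G ↔ IsBoundary G v := by
  simp [boundaryFinset]

lemma mem_interiorFinset {v : V} : v ∈ interiorFinset G ↔ IsInterior G v := by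
  simp [interiorFinset]

lemma sum_degree_boundaryFinset (G : SimpleGraph V) :
    ∑ v ∈ boundaryFinset G, G.degree v = #(boundaryFinset G) := by
  rw [sum_congr rfl fun v hv => mem_boundaryFinset.1 hv, card_eq_sum_ones]

lemma IsBoundary.eq_of_adj {u v w : V} (hu : IsBoundary G u) (hv : G.Adj u v) (hw : G.Adj u w) :
    v = w :=
  (degree_eq_one_iff_existsUnique_adj.1 hu).unique hv hw

lemma IsTreeWithBoundary.isBoundary_or_isInterior (hG : IsTreeWithBoundary G) (v : V) :
    IsBoundary G v ∨ IsInterior G v := by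
  obtain ⟨x, hx⟩ := hG.2.1
  obtain rfl | hvx := eq_or_ne v x
  · exact Or.inr hx
  · have hpos : 0 < G.degree v := (hG.1.connected v x).degree_pos_left hvx
    unfold IsBoundary IsInterior
    omega

lemma IsTreeWithBoundary.isInterior_of_adj (hG : IsTreeWithBoundary G) {u v : V}
    (hu : IsBoundary G u) (huv : G.Adj u v) : IsInterior G v := by
  refine (hG.isBoundary_or_isInterior v).resolve_left fun hv => ?_
  obtain ⟨x, hx⟩ := hG.2.1
  obtain ⟨p, hp, -⟩ := hG.1.existsUnique_path u x
  cases p with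
  | nil => exact not_isBoundary_of_isInterior hx hu
  | cons huw q =>
    obtain rfl := hu.eq_of_adj huw huv
    cases q with
    | nil => exact not_isBoundary_of_isInterior hx hv
    | cons hvw q =>
      obtain rfl := hv.eq_of_adj hvw huv.symm
      simp at hp

lemma IsTreeWithBoundary.interiorFinset_eq (hG : IsTreeWithBoundary G) :
    interiorFinset G = univ.filter fun v => ¬ IsBoundary G v :=
  filter_congr fun v _ => ⟨not_isBoundary_of_isInterior,
    (hG.isBoundary_or_isInterior v).resolve_left⟩

lemma IsTreeWithBoundary.card_boundaryFinset_add (hG : IsTreeWithBoundary G) :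
    #(boundaryFinset G) + #(interiorFinset G) = Fintype.card V := by
  rw [hG.interiorFinset_eq, boundaryFinset, card_filter_add_card_filter_not, card_univ]

lemma IsTreeWithBoundary.sum_degree_interiorFinset_add_two (hG : IsTreeWithBoundary G) :
    ∑ v ∈ interiorFinset G, G.degree v + 2 = Fintype.card V + #(interiorFinset G) := by
  have hsplit := sum_filter_add_sum_filter_not univ (IsBoundary G) fun v => G.degree v
  rw [← hG.interiorFinset_eq, ← boundaryFinset, sum_degree_boundaryFinset,
    sum_degrees_eq_twice_card_edges] at hsplit
  have := hG.card_boundaryFinset_add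
  have := hG.1.card_edgeFinset
  omega

lemma IsTreeWithBoundary.two_le_card_boundaryFinset (hG : IsTreeWithBoundary G) :
    2 ≤ #(boundaryFinset G) := by
  have := hG.card_boundaryFinset_add
  have := hG.sum_degree_interiorFinset_add_two
  have := card_nsmul_le_sum (interiorFinset G) (fun v => G.degree v) 2
    fun v hv => mem_interiorFinset.1 hv
  rw [smul_eq_mul] at this
  omega

lemma IsTreeWithBoundary.degree_le_two (hG : IsTreeWithBoundary G)
    (hcard : #(boundaryFinset G) = 2) (v : V) : G.degree v ≤ 2 := by
  obtain hv | hv := hG.isBoundary_or_isInterior v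
  · exact hv.trans_le one_le_two
  have := hG.card_boundaryFinset_add
  have := hG.sum_degree_interiorFinset_add_two
  have hsum : ∑ v ∈ interiorFinset G, 2 = ∑ v ∈ interiorFinset G, G.degree v := by
    rw [sum_const, smul_eq_mul]
    omega
  exact ((sum_eq_sum_iff_of_le fun v hv => mem_interiorFinset.1 hv).1 hsum v
    (mem_interiorFinset.2 hv)).ge

end TreesWithBoundary

section Energy

open SimpleGraph

variable {V : Type*} [Fintype V] {G : SimpleGraph V} {r : V → ℕ} {k : ℕ}

/-- The number of edges of `G` that cross both the gap between the levels `p` and `p + 1` of `r` and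
the gap between `q` and `q + 1`; these counts are the coefficients of the energy of `a ∘ r` as a
quadratic form in the increments of `a`. -/
def crossing (G : SimpleGraph V) (r : V → ℕ) (p q : ℕ) : ℕ :=
  #(G.interedges {v | r v ≤ min p q} {v | max p q < r v})

lemma crossing_comm (G : SimpleGraph V) (r : V → ℕ) (p q : ℕ) :
    crossing G r p q = crossing G r q p := by
  rw [crossing, min_comm, max_comm, ← crossing]

lemma cast_crossing (G : SimpleGraph V) (r : V → ℕ) (p q : ℕ) :
    (crossing G r p q : ℝ) =
      ∑ u, ∑ v, if G.Adj u v ∧ r u ≤ min p q ∧ max p q < r v then 1 else 0 := by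
  rw [← Fintype.sum_prod_type' fun u v =>
    if G.Adj u v ∧ r u ≤ min p q ∧ max p q < r v then (1 : ℝ) else 0, sum_boole, crossing]
  congr 2
  ext e
  simp only [mem_interedges_iff, mem_filter_univ]
  tauto

lemma sub_eq_sum_range {x y : ℕ} (hx : x ≤ k) (hy : y ≤ k) (a : ℕ → ℝ) :
    a y - a x = ∑ p ∈ range k,
      ((if p < y then 1 else 0) - if p < x then 1 else 0) * (a (p + 1) - a p) := by
  have telescope {z : ℕ} (hz : z ≤ k) :
      a z - a 0 = ∑ p ∈ range k, (if p < z then 1 else 0) * (a (p + 1) - a p) := by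
    simp only [ite_mul, one_mul, zero_mul, ← sum_filter]
    rw [← sum_range_sub]
    congr 1
    ext p
    simp only [mem_range, mem_filter]
    omega
  simp only [sub_mul, sum_sub_distrib, ← telescope hx, ← telescope hy]
  ring

lemma sq_sub_eq_sum_range {x y : ℕ} (hx : x ≤ k) (hy : y ≤ k) (a : ℕ → ℝ) :
    (a x - a y) ^ 2 = ∑ p ∈ range k, ∑ q ∈ range k,
      ((if x ≤ min p q ∧ max p q < y then 1 else 0) +
        if y ≤ min p q ∧ max p q < x then 1 else 0) *
      ((a (p + 1) - a p) * (a (q + 1) - a q)) := by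
  rw [← neg_sub, neg_sq, sub_eq_sum_range hx hy, sq, sum_mul_sum]
  refine sum_congr rfl fun p _ => sum_congr rfl fun q _ => ?_
  rw [mul_mul_mul_comm]
  congr 1
  split_ifs <;> first | omega | norm_num

lemma quadForm_comp (hr : ∀ v, r v ≤ k) (a : ℕ → ℝ) :
    quadForm G (a ∘ r) = ∑ p ∈ range k, ∑ q ∈ range k,
      crossing G r p q * ((a (p + 1) - a p) * (a (q + 1) - a q)) := by
  have hswap (p q : ℕ) : (crossing G r p q : ℝ) =
      ∑ u, ∑ v, if G.Adj u v ∧ r v ≤ min p q ∧ max p q < r u then 1 else 0 := by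
    rw [sum_comm]
    simp only [cast_crossing, G.adj_comm]
  have henergy : quadForm G (a ∘ r) = (∑ u, ∑ v, ∑ p ∈ range k, ∑ q ∈ range k,
      ((if G.Adj u v ∧ r u ≤ min p q ∧ max p q < r v then 1 else 0) +
        if G.Adj u v ∧ r v ≤ min p q ∧ max p q < r u then 1 else 0) *
      ((a (p + 1) - a p) * (a (q + 1) - a q))) / 2 := by
    rw [quadForm_eq_sum_ite]
    congr! 5 with u _ v
    split_ifs with huv
    · simp only [huv, true_and, Function.comp_apply, sq_sub_eq_sum_range (hr u) (hr v)]
    · simp [huv]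
  rw [henergy]
  simp only [sum_comm (s := univ) (t := range k), ← sum_mul, sum_add_distrib, ← hswap,
    ← cast_crossing, ← two_mul, mul_assoc, ← mul_sum]
  rw [mul_div_cancel_left₀ _ two_ne_zero]

end Energy

section Ranking

open Matrix SimpleGraph

variable {V : Type*} [Fintype V] {G : SimpleGraph V} {r : V → ℕ} {k p : ℕ}

/-- A ranking numbers the interior vertices of `G` by `1, …, k`; all boundary vertices get rank `0`,
so that a function vanishing on the boundary has the form `a ∘ r` with `a 0 = 0`. -/
structure IsRanking (G : SimpleGraph V) (k : ℕ) (r : V → ℕ) : Prop where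
  eq_zero : ∀ v, IsBoundary G v → r v = 0
  bijOn : Set.BijOn r {v | ¬ IsBoundary G v} (Set.Icc 1 k)

lemma IsRanking.eq_zero_iff (hr : IsRanking G k r) {v : V} : r v = 0 ↔ IsBoundary G v :=
  ⟨fun h0 => by_contra fun hv => by simpa [h0] using hr.bijOn.mapsTo hv, hr.eq_zero v⟩

lemma IsRanking.le (hr : IsRanking G k r) (v : V) : r v ≤ k := by
  by_cases hv : IsBoundary G v
  · exact (hr.eq_zero v hv).trans_le k.zero_le
  · exact (hr.bijOn.mapsTo hv).2

lemma IsRanking.eq_of_eq (hr : IsRanking G k r) {u v : V} (huv : r u = r v) (hv : r v ≠ 0) :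
    u = v :=
  hr.bijOn.injOn (hr.eq_zero_iff.not.1 (huv.trans_ne hv)) (hr.eq_zero_iff.not.1 hv) huv

lemma IsRanking.exists_eq (hr : IsRanking G k r) {i : ℕ} (hi : 1 ≤ i) (hik : i ≤ k) :
    ∃ v, r v = i := by
  obtain ⟨v, -, hv⟩ := hr.bijOn.surjOn ⟨hi, hik⟩
  exact ⟨v, hv⟩

lemma IsRanking.bijOn_filter (hr : IsRanking G k r) :
    Set.BijOn r ({v | ¬ IsBoundary G v} : Finset V) (Icc 1 k : Finset ℕ) := by
  rw [coe_filter_univ, coe_Icc]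
  exact hr.bijOn

lemma IsRanking.card_filter (hr : IsRanking G k r) : #{v | ¬ IsBoundary G v} = k := by
  rw [card_nbij r hr.bijOn_filter.mapsTo hr.bijOn_filter.injOn hr.bijOn_filter.surjOn,
    Nat.card_Icc, Nat.add_sub_cancel]

lemma IsRanking.sum_comp (hr : IsRanking G k r) {φ : ℕ → ℝ} (hφ : φ 0 = 0) :
    ∑ v, φ (r v) = ∑ i ∈ Icc 1 k, φ i := by
  rw [← sum_filter_of_ne (p := fun v => ¬ IsBoundary G v)
    fun v _ hv hbd => hv (by rw [hr.eq_zero v hbd, hφ])]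
  exact sum_nbij r hr.bijOn_filter.mapsTo hr.bijOn_filter.injOn hr.bijOn_filter.surjOn
    fun _ _ => rfl

lemma IsRanking.comp_mem_dirichletSpace (hr : IsRanking G k r) {a : ℕ → ℝ} (ha : a 0 = 0) :
    a ∘ r ∈ dirichletSpace G := fun v hv => by
  rw [Function.comp_apply, hr.eq_zero v hv, ha]

lemma exists_equiv_fin_monotone {ι : Type*} [Fintype ι] (f : ι → ℝ) :
    ∃ e : Fin (Fintype.card ι) ≃ ι, Monotone (f ∘ e) := by
  let e := (Fintype.equivFin ι).symm
  exact ⟨(Tuple.sort (f ∘ e)).trans e, Tuple.monotone_sort (f ∘ e)⟩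

lemma exists_isRanking {f : V → ℝ} (hf0 : 0 ≤ f) (hf : f ∈ dirichletSpace G) :
    ∃ r, IsRanking G #{v | ¬ IsBoundary G v} r ∧ ∀ u v, r u ≤ r v → f u ≤ f v := by
  rw [← Fintype.card_subtype]
  obtain ⟨e, he⟩ := exists_equiv_fin_monotone fun v : {v // ¬ IsBoundary G v} => f v
  let r (v : V) : ℕ := if hv : IsBoundary G v then 0 else e.symm ⟨v, hv⟩ + 1
  have r_of_not (v : V) (hv : ¬ IsBoundary G v) : r v = e.symm ⟨v, hv⟩ + 1 := dif_neg hv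
  refine ⟨r, ⟨fun v hv => dif_pos hv, fun v hv => ?_, fun u hu v hv huv => ?_, fun i hi => ?_⟩,
    fun u v huv => ?_⟩
  · rw [r_of_not v hv]
    exact ⟨Nat.succ_pos _, (e.symm ⟨v, hv⟩).isLt⟩
  · rw [r_of_not u hu, r_of_not v hv, Nat.add_right_cancel_iff, Fin.val_inj,
      e.symm.injective.eq_iff] at huv
    exact congrArg Subtype.val huv
  · let j : Fin _ := ⟨i - 1, (Nat.sub_lt hi.1 one_pos).trans_le hi.2⟩
    refine ⟨e j, (e j).2, ?_⟩
    rw [r_of_not _ (e j).2, Subtype.coe_eta, e.symm_apply_apply]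
    exact Nat.sub_add_cancel hi.1
  · by_cases hu : IsBoundary G u
    · exact (hf u hu).trans_le (hf0 v)
    have hv : ¬ IsBoundary G v := fun hv => by simp [r, hu, hv] at huv
    rw [r_of_not u hu, r_of_not v hv, Nat.add_le_add_iff_right, Fin.val_fin_le] at huv
    simpa using he huv

lemma exists_isRanking_comp_eq {f : V → ℝ} (hbd : ∃ v, IsBoundary G v) (hf0 : 0 ≤ f)
    (hf : f ∈ dirichletSpace G) :
    ∃ r a, IsRanking G #{v | ¬ IsBoundary G v} r ∧ Monotone a ∧ a 0 = 0 ∧ f = a ∘ r := by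
  obtain ⟨r, hr, hmono⟩ := exists_isRanking hf0 hf
  obtain ⟨x, hx⟩ := hbd
  have hsurj (i : ℕ) : ∃ v, r v = min i #{v | ¬ IsBoundary G v} := by
    obtain h0 | hpos := (min i #{v | ¬ IsBoundary G v}).eq_zero_or_pos
    · exact ⟨x, (hr.eq_zero x hx).trans h0.symm⟩
    · exact hr.exists_eq hpos (min_le_right _ _)
  choose g hg using hsurj
  refine ⟨r, f ∘ g, hr, fun i j hij => hmono _ _ ?_, hf _ (hr.eq_zero_iff.1 ?_), funext fun v => ?_⟩
  · rw [hg, hg]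
    exact min_le_min_right _ hij
  · rw [hg, Nat.zero_min]
  · have hv : r v = r (g (r v)) := by rw [hg, min_eq_left (hr.le v)]
    exact (hmono _ _ hv.le).antisymm (hmono _ _ hv.ge)

lemma IsRanking.two_le_degree (hr : IsRanking G k r) (hG : IsTreeWithBoundary G) {v : V}
    (hv : p < r v) : 2 ≤ G.degree v :=
  (hG.isBoundary_or_isInterior v).resolve_left fun hbd => by simp [hr.eq_zero v hbd] at hv

lemma IsRanking.nonempty_filter_lt (hr : IsRanking G k r) (hp : p < k) :
    ({v | p < r v} : Finset V).Nonempty := by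
  obtain ⟨v, hv⟩ := hr.exists_eq (Nat.succ_le_of_lt (p.zero_le.trans_lt hp)) le_rfl
  exact ⟨v, by simpa [hv] using hp⟩

lemma IsRanking.two_le_crossing (hr : IsRanking G k r) (hG : IsTreeWithBoundary G) (hp : p < k) :
    2 ≤ crossing G r p p := by
  have hcut := two_le_card_interedges_compl hG.1.isAcyclic (hr.nonempty_filter_lt hp)
    fun v hv => hr.two_le_degree hG (mem_filter.1 hv).2
  simpa [crossing, compl_filter, not_lt] using hcut

lemma IsRanking.one_le_crossing (hr : IsRanking G k r) (hG : IsTreeWithBoundary G)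
    (hp : p + 1 < k) : 1 ≤ crossing G r p (p + 1) := by
  obtain ⟨z, hz⟩ := hr.exists_eq (Nat.succ_pos p) hp.le
  have hcut := one_le_card_interedges_compl_insert hG.1.isAcyclic (hr.nonempty_filter_lt hp)
    (fun v hv => hr.two_le_degree hG (mem_filter.1 hv).2) (z := z) (by simp [hz])
  rw [crossing, min_eq_left p.le_succ, max_eq_right p.le_succ]
  convert hcut using 3
  ext v
  have hvz : v = z ↔ r v = p + 1 :=
    ⟨fun h => h ▸ hz, fun h => hr.eq_of_eq (h.trans hz.symm) (hz.trans_ne p.succ_ne_zero)⟩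
  simp only [mem_filter_univ, mem_compl, mem_insert, hvz]
  omega

lemma IsRanking.crossing_zero (hr : IsRanking G k r) (hG : IsTreeWithBoundary G) :
    crossing G r 0 0 = #(boundaryFinset G) := by
  rw [← sum_degree_boundaryFinset, ← card_interedges_univ, crossing]
  congr 1
  ext e
  simp only [mem_interedges_iff, mem_filter_univ, mem_boundaryFinset, mem_univ, true_and, min_self,
    max_self, Nat.le_zero, Nat.pos_iff_ne_zero, ne_eq, hr.eq_zero_iff]
  exact ⟨fun h => ⟨h.1, h.2.2⟩,
    fun h => ⟨h.1, not_isBoundary_of_isInterior (hG.isInterior_of_adj h.1 h.2), h.2⟩⟩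

end Ranking

section Comet

open SimpleGraph

lemma isTree_of_parent {V : Type*} [Finite V] {G : SimpleGraph V} (hG : G.Connected) (x : V)
    (parent : V → V)
    (hparent : ∀ u v, G.Adj u v → (v ≠ x ∧ u = parent v) ∨ (u ≠ x ∧ v = parent u)) : G.IsTree := by
  have := Fintype.ofFinite V
  refine isTree_iff_connected_and_card.2 ⟨hG, le_antisymm ?_ hG.card_vert_le_card_edgeSet_add_one⟩
  have hsub : G.edgeFinset ⊆ (univ.erase x).image fun v => s(v, parent v) := by
    intro e he
    induction e with
    | _ u v =>
      rw [mem_image]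
      obtain ⟨hv, rfl⟩ | ⟨hu, rfl⟩ := hparent u v (mem_edgeFinset.1 he)
      · exact ⟨v, by simp [hv], Sym2.eq_swap⟩
      · exact ⟨u, by simp [hu], rfl⟩
  have hcard := (card_le_card hsub).trans card_image_le
  rw [card_erase_of_mem (mem_univ x), card_univ] at hcard
  rw [Nat.card_eq_fintype_card, ← edgeFinset_card, Nat.card_eq_fintype_card]
  have := Fintype.card_pos_iff.2 ⟨x⟩
  omega

variable {n k : ℕ}

lemma cometGraph_adj (hk : 1 ≤ k) {i j : Fin n} : (cometGraph n k).Adj i j ↔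
    (j.val ≠ 0 ∧ i.val = min (j.val - 1) k) ∨ (i.val ≠ 0 ∧ j.val = min (i.val - 1) k) := by
  rw [cometGraph, fromRel_adj, Ne, Fin.ext_iff]
  omega

lemma cometGraph_connected (hk : 1 ≤ k) (hn : 0 < n) : (cometGraph n k).Connected := by
  have hroot (j : ℕ) (hj : j < n) : (cometGraph n k).Reachable ⟨j, hj⟩ ⟨0, hn⟩ := by
    induction j using Nat.strong_induction_on with
    | _ j ih =>
      obtain rfl | hj0 := j.eq_zero_or_pos
      · rfl
      · have hlt : min (j - 1) k < j := by omega
        exact ((cometGraph_adj hk (j := ⟨_, hlt.trans hj⟩)).2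
          (Or.inr ⟨hj0.ne', rfl⟩)).reachable.trans (ih _ hlt _)
  have : Nonempty (Fin n) := ⟨⟨0, hn⟩⟩
  exact ⟨fun u v => (hroot u u.isLt).trans (hroot v v.isLt).symm⟩

lemma cometGraph_isTree (hk : 1 ≤ k) (hn : 0 < n) : (cometGraph n k).IsTree := by
  refine isTree_of_parent (cometGraph_connected hk hn) ⟨0, hn⟩
    (fun j => ⟨min (j - 1) k, by omega⟩) fun i j hij => ?_
  simpa only [Ne, Fin.ext_iff] using (cometGraph_adj hk).1 hij

lemma cometGraph_neighborFinset_of_lt {j : Fin n} (hkn : k + 1 ≤ n) (hj0 : 0 < j.val)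
    (hjk : j.val < k) :
    (cometGraph n k).neighborFinset j = {⟨j - 1, by omega⟩, ⟨j + 1, by omega⟩} := by
  ext i
  rw [mem_neighborFinset, cometGraph_adj (by omega), mem_insert, mem_singleton, Fin.ext_iff,
    Fin.ext_iff]
  dsimp only
  omega

lemma cometGraph_neighborFinset_of_eq {j : Fin n} (hk : 1 ≤ k) (hjk : j.val = k) :
    (cometGraph n k).neighborFinset j = insert ⟨k - 1, by omega⟩ (Ioi j) := by
  ext i
  rw [mem_neighborFinset, cometGraph_adj hk, mem_insert, mem_Ioi, Fin.ext_iff, Fin.lt_def]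
  dsimp only
  omega

lemma cometGraph_degree_of_lt {j : Fin n} (hkn : k + 1 ≤ n) (hj0 : 0 < j.val) (hjk : j.val < k) :
    (cometGraph n k).degree j = 2 := by
  rw [← card_neighborFinset_eq_degree, cometGraph_neighborFinset_of_lt hkn hj0 hjk, card_pair]
  simp only [ne_eq, Fin.mk.injEq]
  omega

lemma cometGraph_degree_of_eq {j : Fin n} (hk : 1 ≤ k) (hjk : j.val = k) :
    (cometGraph n k).degree j = n - k := by
  rw [← card_neighborFinset_eq_degree, cometGraph_neighborFinset_of_eq hk hjk,
    card_insert_of_notMem, Fin.card_Ioi]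
  · omega
  · rw [mem_Ioi, Fin.lt_def]
    dsimp only
    omega

lemma cometGraph_degree_eq_one {j : Fin n} (hk : 1 ≤ k) (hkn : k + 1 ≤ n)
    (hj : j.val = 0 ∨ k < j.val) : (cometGraph n k).degree j = 1 := by
  rw [degree_eq_one_iff_existsUnique_adj]
  refine ⟨⟨if j.val = 0 then 1 else k, by split_ifs <;> omega⟩, ?_, fun i hi => ?_⟩
  · refine (cometGraph_adj hk).2 ?_
    dsimp only
    split_ifs <;> omega
  · replace hi := (cometGraph_adj hk).1 hi
    rw [Fin.ext_iff]
    dsimp only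
    split_ifs <;> omega

lemma cometGraph_isInterior (hk : 1 ≤ k) (hkn : k + 2 ≤ n) {j : Fin n} (hj0 : 0 < j.val)
    (hjk : j.val ≤ k) : IsInterior (cometGraph n k) j := by
  unfold IsInterior
  obtain hlt | heq := hjk.lt_or_eq
  · exact (cometGraph_degree_of_lt (by omega) hj0 hlt).ge
  · rw [cometGraph_degree_of_eq hk heq]
    omega

lemma cometGraph_isBoundary_iff (hk : 1 ≤ k) (hkn : k + 2 ≤ n) {j : Fin n} :
    IsBoundary (cometGraph n k) j ↔ j.val = 0 ∨ k < j.val := by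
  refine ⟨fun hj => ?_, cometGraph_degree_eq_one hk (by omega)⟩
  by_contra! hint
  exact not_isBoundary_of_isInterior
    (cometGraph_isInterior hk hkn (Nat.pos_of_ne_zero hint.1) hint.2) hj

lemma cometGraph_isTreeWithBoundary (hk : 1 ≤ k) (hkn : k + 2 ≤ n) :
    IsTreeWithBoundary (cometGraph n k) :=
  ⟨cometGraph_isTree hk (by omega),
    ⟨⟨1, by omega⟩, cometGraph_isInterior hk hkn one_pos hk⟩,
    ⟨⟨0, by omega⟩, (cometGraph_isBoundary_iff hk hkn).2 (Or.inl rfl)⟩⟩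

/-- The ranking of the comet that spirals inwards from both ends of its path: the ranks
`1, 2, 3, 4, …` are given to the vertices `k, 1, k - 1, 2, …`. -/
def cometRank (n k : ℕ) (j : Fin n) : ℕ :=
  if j.val ≤ k then min (2 * j) (2 * (k - j) + 1) else 0

lemma isRanking_cometRank (hk : 1 ≤ k) (hkn : k + 2 ≤ n) :
    IsRanking (cometGraph n k) k (cometRank n k) := by
  have hbd (j : Fin n) : ¬ IsBoundary (cometGraph n k) j ↔ 0 < j.val ∧ j.val ≤ k := by
    rw [cometGraph_isBoundary_iff hk hkn]
    omega
  refine ⟨fun j hj => ?_, fun j hj => ?_, fun i hi j hj hij => ?_, fun i hi => ?_⟩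
  · rw [cometGraph_isBoundary_iff hk hkn] at hj
    unfold cometRank
    split_ifs <;> omega
  · obtain ⟨hj0, hjk⟩ := (hbd j).1 hj
    rw [cometRank, if_pos hjk, Set.mem_Icc]
    omega
  · obtain ⟨hi0, hik⟩ := (hbd i).1 hi
    obtain ⟨hj0, hjk⟩ := (hbd j).1 hj
    rw [cometRank, if_pos hik, cometRank, if_pos hjk] at hij
    omega
  · obtain ⟨hi1, hik⟩ := hi
    have hlt : (if i % 2 = 0 then i / 2 else k - i / 2) < n := by split_ifs <;> omega
    refine ⟨⟨_, hlt⟩, (hbd _).2 ?_, ?_⟩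
    · dsimp only
      split_ifs <;> omega
    · unfold cometRank
      dsimp only
      split_ifs <;> omega

lemma card_interiorFinset_cometGraph (hk : 1 ≤ k) (hkn : k + 2 ≤ n) :
    #(interiorFinset (cometGraph n k)) = k := by
  rw [(cometGraph_isTreeWithBoundary hk hkn).interiorFinset_eq]
  exact (isRanking_cometRank hk hkn).card_filter

lemma cometRank_eq_min_of_adj (hk : 1 ≤ k) {i j : Fin n} (hij : (cometGraph n k).Adj i j)
    (hlt : cometRank n k i < cometRank n k j) (hj : 1 < cometRank n k j) :
    cometRank n k j = min (cometRank n k i + 2) k ∧ (cometRank n k i = 0 → i.val = 0) := by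
  rw [cometGraph_adj hk] at hij
  unfold cometRank at *
  split_ifs at * <;> omega

end Comet

section Comparison

open SimpleGraph

variable {V : Type*} [Fintype V] {G : SimpleGraph V} {r : V → ℕ} {n k p q : ℕ}

-- The subtraction is truncated: the bound is `2, 1, 0, 0, …` for `q = p, p + 1, p + 2, p + 3, …`.
lemma IsRanking.le_crossing (hr : IsRanking G k r) (hG : IsTreeWithBoundary G) (hpq : p ≤ q)
    (hq : q < k) : p + 2 - q ≤ crossing G r p q := by
  obtain rfl | rfl | hlt : q = p ∨ q = p + 1 ∨ p + 2 ≤ q := by omega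
  · rw [Nat.add_sub_cancel_left]
    exact hr.two_le_crossing hG hq
  · rw [Nat.add_sub_add_left]
    exact hr.one_le_crossing hG hq
  · rw [Nat.sub_eq_zero_of_le hlt]
    exact Nat.zero_le _

lemma crossing_cometRank_le_sub (hk : 1 ≤ k) (hkn : k + 2 ≤ n) (hpq : p ≤ q) (hq : 0 < q) :
    crossing (cometGraph n k) (cometRank n k) p q ≤ p + 2 - q := by
  have hR := isRanking_cometRank hk hkn
  rw [crossing, min_eq_left hpq, max_eq_right hpq]
  have hedge {e : Fin n × Fin n}
      (he : e ∈ (cometGraph n k).interedges {v | cometRank n k v ≤ p} {v | q < cometRank n k v}) :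
      q < cometRank n k e.2 ∧ cometRank n k e.1 ≤ p ∧
        cometRank n k e.2 = min (cometRank n k e.1 + 2) k ∧
        (cometRank n k e.1 = 0 → e.1.val = 0) := by
    obtain ⟨hu, hv, huv⟩ := (mem_interedges_iff _).1 he
    rw [mem_filter_univ] at hu hv
    exact ⟨hv, hu, cometRank_eq_min_of_adj hk huv (hu.trans_lt (hpq.trans_lt hv)) (by omega)⟩
  calc _ ≤ #(Icc (q - 1) p) := card_le_card_of_injOn (fun e => cometRank n k e.1) ?_ ?_
    _ = p + 2 - q := by rw [Nat.card_Icc]; omega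
  · intro e he
    have := hedge he
    simp only [coe_Icc, Set.mem_Icc]
    omega
  · intro e he e' he' (hee' : cometRank n k e.1 = cometRank n k e'.1)
    obtain ⟨-, -, hnext, hzero⟩ := hedge he
    obtain ⟨hv', -, hnext', hzero'⟩ := hedge he'
    refine Prod.ext ?_ (hR.eq_of_eq (by rw [hnext, hnext', hee']) (by omega))
    obtain h0 | h0 := eq_or_ne (cometRank n k e'.1) 0
    · exact Fin.ext ((hzero (hee'.trans h0)).trans (hzero' h0).symm)
    · exact hR.eq_of_eq hee' h0

lemma crossing_cometRank (hk : 1 ≤ k) (hkn : k + 2 ≤ n) (hpq : p ≤ q) (hq0 : 0 < q) (hq : q < k) :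
    crossing (cometGraph n k) (cometRank n k) p q = p + 2 - q :=
  (crossing_cometRank_le_sub hk hkn hpq hq0).antisymm
    ((isRanking_cometRank hk hkn).le_crossing (cometGraph_isTreeWithBoundary hk hkn) hpq hq)

lemma IsRanking.crossing_cometRank_le (hr : IsRanking G k r) (hG : IsTreeWithBoundary G)
    (hk : 1 ≤ k) (hkn : k + 2 ≤ n)
    (hbd : #(boundaryFinset G) = #(boundaryFinset (cometGraph n k))) (hp : p < k) (hq : q < k) :
    crossing (cometGraph n k) (cometRank n k) p q ≤ crossing G r p q := by
  wlog hpq : p ≤ q generalizing p q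
  · rw [crossing_comm, crossing_comm G]
    exact this hq hp (le_of_not_ge hpq)
  obtain rfl | hq0 := q.eq_zero_or_pos
  · obtain rfl := Nat.le_zero.1 hpq
    rw [hr.crossing_zero hG, hbd,
      (isRanking_cometRank hk hkn).crossing_zero (cometGraph_isTreeWithBoundary hk hkn)]
  · rw [crossing_cometRank hk hkn hpq hq0 hq]
    exact hr.le_crossing hG hpq hq

lemma IsRanking.quadForm_cometRank_le (hr : IsRanking G k r) (hG : IsTreeWithBoundary G)
    (hk : 1 ≤ k) (hkn : k + 2 ≤ n)
    (hbd : #(boundaryFinset G) = #(boundaryFinset (cometGraph n k))) {a : ℕ → ℝ}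
    (ha : Monotone a) : quadForm (cometGraph n k) (a ∘ cometRank n k) ≤ quadForm G (a ∘ r) := by
  rw [quadForm_comp (isRanking_cometRank hk hkn).le, quadForm_comp hr.le]
  refine sum_le_sum fun p hp => sum_le_sum fun q hq => ?_
  refine mul_le_mul_of_nonneg_right (Nat.cast_le.2 ?_)
    (mul_nonneg (sub_nonneg.2 (ha p.le_succ)) (sub_nonneg.2 (ha q.le_succ)))
  exact hr.crossing_cometRank_le hG hk hkn hbd (mem_range.1 hp) (mem_range.1 hq)

lemma IsRanking.crossing_eq_of_quadForm_eq (hr : IsRanking G k r) (hG : IsTreeWithBoundary G)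
    (hk : 1 ≤ k) (hkn : k + 2 ≤ n)
    (hbd : #(boundaryFinset G) = #(boundaryFinset (cometGraph n k))) {a : ℕ → ℝ}
    (ha : ∀ i < k, a i < a (i + 1))
    (heq : quadForm (cometGraph n k) (a ∘ cometRank n k) = quadForm G (a ∘ r))
    (hp : p < k) (hq : q < k) :
    crossing (cometGraph n k) (cometRank n k) p q = crossing G r p q := by
  have hpos {i j : ℕ} (hi : i ∈ range k) (hj : j ∈ range k) :
      0 < (a (i + 1) - a i) * (a (j + 1) - a j) :=
    mul_pos (sub_pos.2 (ha i (mem_range.1 hi))) (sub_pos.2 (ha j (mem_range.1 hj)))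
  have hle {i j : ℕ} (hi : i ∈ range k) (hj : j ∈ range k) :
      crossing (cometGraph n k) (cometRank n k) i j * ((a (i + 1) - a i) * (a (j + 1) - a j)) ≤
        crossing G r i j * ((a (i + 1) - a i) * (a (j + 1) - a j)) := by
    have := hr.crossing_cometRank_le hG hk hkn hbd (mem_range.1 hi) (mem_range.1 hj)
    have := hpos hi hj
    gcongr
  rw [quadForm_comp (isRanking_cometRank hk hkn).le, quadForm_comp hr.le,
    sum_eq_sum_iff_of_le fun i hi => sum_le_sum fun j hj => hle hi hj] at heq
  replace heq := (sum_eq_sum_iff_of_le fun j hj => hle (mem_range.2 hp) hj).1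
    (heq p (mem_range.2 hp)) q (mem_range.2 hq)
  exact_mod_cast mul_right_cancel₀ (hpos (mem_range.2 hp) (mem_range.2 hq)).ne' heq

end Comparison

section Spiral

open SimpleGraph

variable {n k : ℕ} {a : ℕ → ℝ}

/-- The interior vertex of rank `i` of the comet, ranked by `cometRank`, has its neighbours in the
ranks `i - 2` and `spiralNext k i`, and possibly further ones in rank `0`. -/
def spiralNext (k i : ℕ) : ℕ :=
  if i < k then min (i + 2) k else k - 1

lemma cometRank_eq_one_iff {j : Fin n} (hj0 : 0 < j.val) (hjk : j.val ≤ k) :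
    cometRank n k j = 1 ↔ j.val = k := by
  rw [cometRank, if_pos hjk]
  omega

lemma sum_neighborFinset_comp_cometRank (hkn : k + 1 ≤ n) (ha0 : a 0 = 0) {j : Fin n}
    (hj0 : 0 < j.val) (hjk : j.val ≤ k) :
    ∑ i ∈ (cometGraph n k).neighborFinset j, a (cometRank n k i) =
      a (cometRank n k j - 2) + a (spiralNext k (cometRank n k j)) := by
  obtain hlt | heq := hjk.lt_or_eq
  · rw [cometGraph_neighborFinset_of_lt hkn hj0 hlt, sum_pair (by simp [Fin.ext_iff])]
    set i := cometRank n k j with hi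
    obtain ⟨hprev, hnext⟩ | ⟨hprev, hnext⟩ :
        cometRank n k ⟨j - 1, by omega⟩ = i - 2 ∧
            cometRank n k ⟨j + 1, by omega⟩ = spiralNext k i ∨
          cometRank n k ⟨j - 1, by omega⟩ = spiralNext k i ∧
            cometRank n k ⟨j + 1, by omega⟩ = i - 2 := by
      rw [hi]
      unfold cometRank spiralNext
      dsimp only
      split_ifs
      all_goals omega
    · rw [hprev, hnext]
    · rw [hprev, hnext, add_comm]
  · have hrank : cometRank n k j = 1 := (cometRank_eq_one_iff hj0 hjk).2 heq
    have hprev : cometRank n k ⟨k - 1, by omega⟩ = spiralNext k 1 := by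
      unfold cometRank spiralNext
      dsimp only
      split_ifs
      all_goals omega
    have hleaf : ∑ i ∈ Ioi j, a (cometRank n k i) = 0 := sum_eq_zero fun i hi => by
      rw [mem_Ioi, Fin.lt_def, heq] at hi
      rw [cometRank, if_neg hi.not_ge, ha0]
    rw [cometGraph_neighborFinset_of_eq (by omega) heq, sum_insert, hleaf, hprev, hrank, ha0,
      add_zero, zero_add]
    rw [mem_Ioi, Fin.lt_def]
    dsimp only
    omega

lemma lapApply_comp_cometRank (hk : 1 ≤ k) (hkn : k + 2 ≤ n) (ha0 : a 0 = 0) {j : Fin n}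
    (hj : ¬ IsBoundary (cometGraph n k) j) :
    lapApply (cometGraph n k) (a ∘ cometRank n k) j =
      (if cometRank n k j = 1 then (n : ℝ) - k else 2) * a (cometRank n k j) -
        (a (cometRank n k j - 2) + a (spiralNext k (cometRank n k j))) := by
  rw [cometGraph_isBoundary_iff hk hkn, not_or, ← ne_eq, ← Nat.pos_iff_ne_zero, not_lt] at hj
  rw [← sum_neighborFinset_comp_cometRank (by omega) ha0 hj.1 hj.2, lapApply]
  simp only [Function.comp_apply]
  congr 2
  simp only [cometRank_eq_one_iff hj.1 hj.2]
  obtain hlt | heq := hj.2.lt_or_eq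
  · rw [cometGraph_degree_of_lt (by omega) hj.1 hlt, if_neg hlt.ne, Nat.cast_two]
  · rw [cometGraph_degree_of_eq hk heq, if_pos heq, Nat.cast_sub (by omega)]

lemma apply_one_pos_of_spiral_eq {c : ℕ → ℝ} (ha : Monotone a) (ha0 : a 0 = 0) (hak : a k ≠ 0)
    (heq : ∀ i, 1 ≤ i → i ≤ k → c i * a i = a (i - 2) + a (spiralNext k i)) : 0 < a 1 := by
  have hnonneg (i : ℕ) : 0 ≤ a i := ha0.symm.trans_le (ha i.zero_le)
  refine (hnonneg 1).lt_of_ne' fun ha1 => hak ?_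
  have hzero (i : ℕ) (hi : i ≤ k) : a i = 0 := by
    induction i with
    | zero => exact ha0
    | succ i ih =>
      obtain rfl | hi1 := i.eq_zero_or_pos
      · exact ha1
      · have hnext : i + 1 ≤ spiralNext k i := by
          unfold spiralNext
          split_ifs <;> omega
        have heqi := heq i hi1 (by omega)
        rw [ih (by omega), mul_zero] at heqi
        linarith [ha hnext, hnonneg (i - 2), hnonneg (i + 1)]
  exact hzero k le_rfl

lemma apply_spiralNext_le_of_eq_succ {p : ℕ} (ha : Monotone a) (hp : p < k)
    (htie : a p = a (p + 1)) : a (spiralNext k p) ≤ a (spiralNext k (p + 1)) := by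
  obtain rfl | hlt := (Nat.succ_le_of_lt hp).eq_or_lt
  · rw [show spiralNext (p + 1) p = p + 1 by simp [spiralNext],
      show spiralNext (p + 1) (p + 1) = p by simp [spiralNext], htie]
  · refine ha ?_
    rw [spiralNext, if_pos hp, spiralNext, if_pos hlt]
    omega

lemma lt_succ_of_spiral_eq {c₁ c₂ : ℝ} (hc : c₂ < c₁) (ha : Monotone a) (ha0 : a 0 = 0)
    (hak : a k ≠ 0) (heq : ∀ i, 1 ≤ i → i ≤ k →
      (if i = 1 then c₁ else c₂) * a i = a (i - 2) + a (spiralNext k i))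
    {p : ℕ} (hp : p < k) : a p < a (p + 1) := by
  have ha1 : 0 < a 1 := apply_one_pos_of_spiral_eq ha ha0 hak heq
  induction p using Nat.strong_induction_on with
  | _ p ih =>
    -- Subtracting the equations at `p` and `p + 1`, a tie forces `a (p - 1) ≤ a (p - 2)`.
    refine (ha p.le_succ).lt_of_ne fun htie => ?_
    have hnext := apply_spiralNext_le_of_eq_succ ha hp htie
    have hupper := heq (p + 1) (by omega) hp
    obtain rfl | rfl | hp2 : p = 0 ∨ p = 1 ∨ 2 ≤ p := by omega
    · exact ha1.ne (ha0.symm.trans htie)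
    · have hlower := heq 1 le_rfl hp.le
      rw [if_pos rfl] at hlower
      rw [if_neg (by omega), ← htie] at hupper
      linarith [mul_lt_mul_of_pos_right hc ha1, ha (show 1 - 2 ≤ 1 + 1 - 2 by omega)]
    · have hlower := heq p (by omega) hp.le
      rw [if_neg (by omega)] at hlower
      rw [if_neg (by omega), ← htie] at hupper
      have hgap : a (p - 2) < a (p + 1 - 2) := by
        convert ih (p - 2) (by omega) (by omega) using 2
        omega
      linarith

end Spiral

section GroundState

open Matrix SimpleGraph

variable {V : Type*} [Fintype V] {G : SimpleGraph V} {r : V → ℕ} {n k p q : ℕ} {a : ℕ → ℝ}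

lemma IsRanking.comp_dotProduct_comp (hr : IsRanking G k r) (ha0 : a 0 = 0) :
    (a ∘ r) ⬝ᵥ (a ∘ r) = ∑ i ∈ Icc 1 k, a i * a i :=
  hr.sum_comp (φ := fun i => a i * a i) (by simp [ha0])

lemma exists_isRanking_isRayleighMinimizer (hG : IsTreeWithBoundary G) :
    ∃ r a, IsRanking G #(interiorFinset G) r ∧ Monotone a ∧ a 0 = 0 ∧
      IsRayleighMinimizer G (dirichletLambda G) (a ∘ r) := by
  obtain ⟨f, hf0, hf⟩ := exists_isRayleighMinimizer_nonneg hG.2.1 hG.isBoundary_or_isInterior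
  obtain ⟨r, a, hr, ha, ha0, rfl⟩ := exists_isRanking_comp_eq hG.2.2 hf0 hf.mem
  rw [hG.interiorFinset_eq]
  exact ⟨r, a, hr, ha, ha0, hf⟩

lemma dirichletLambda_mul_le_quadForm (hG : IsTreeWithBoundary G) {f : V → ℝ}
    (hf : f ∈ dirichletSpace G) : dirichletLambda G * (f ⬝ᵥ f) ≤ quadForm G f := by
  obtain ⟨g, -, hg⟩ := exists_isRayleighMinimizer_nonneg hG.2.1 hG.isBoundary_or_isInterior
  exact hg.mul_le_quadForm f hf

lemma IsRanking.dirichletLambda_cometGraph_le_quadForm (hr : IsRanking G k r) (hk : 1 ≤ k)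
    (hkn : k + 2 ≤ n) (ha0 : a 0 = 0) (hnorm : (a ∘ r) ⬝ᵥ (a ∘ r) = 1) :
    dirichletLambda (cometGraph n k) ≤ quadForm (cometGraph n k) (a ∘ cometRank n k) := by
  have hR := isRanking_cometRank hk hkn
  have hle := dirichletLambda_mul_le_quadForm (cometGraph_isTreeWithBoundary hk hkn)
    (hR.comp_mem_dirichletSpace ha0)
  rwa [hR.comp_dotProduct_comp ha0, ← hr.comp_dotProduct_comp ha0, hnorm, mul_one] at hle

lemma dirichletLambda_cometGraph_le (hG : IsTreeWithBoundary G) (hk : 1 ≤ k) (hkn : k + 2 ≤ n)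
    (hint : #(interiorFinset G) = k)
    (hbd : #(boundaryFinset G) = #(boundaryFinset (cometGraph n k))) :
    dirichletLambda (cometGraph n k) ≤ dirichletLambda G := by
  obtain ⟨r, a, hr, ha, ha0, hf⟩ := exists_isRanking_isRayleighMinimizer hG
  rw [hint] at hr
  calc dirichletLambda (cometGraph n k)
      ≤ quadForm (cometGraph n k) (a ∘ cometRank n k) :=
        hr.dirichletLambda_cometGraph_le_quadForm hk hkn ha0 hf.dotProduct_self
    _ ≤ quadForm G (a ∘ r) := hr.quadForm_cometRank_le hG hk hkn hbd ha
    _ = dirichletLambda G := hf.quadForm_eq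

lemma IsRayleighMinimizer.lt_succ_of_comp_cometRank {μ : ℝ}
    (hf : IsRayleighMinimizer (cometGraph n k) μ (a ∘ cometRank n k)) (hk : 1 ≤ k)
    (hkn : k + 3 ≤ n) (ha : Monotone a) (ha0 : a 0 = 0) (hp : p < k) : a p < a (p + 1) := by
  have hR := isRanking_cometRank hk (Nat.le_of_succ_le hkn)
  have hcoeff : 2 - μ < n - k - μ := by
    have : (k : ℝ) + 3 ≤ n := by exact_mod_cast hkn
    linarith
  refine lt_succ_of_spiral_eq hcoeff ha ha0 (fun hak => ?_) (fun i hi hik => ?_) hp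
  · have hzero : ∑ i ∈ Icc 1 k, a i * a i = 0 := sum_eq_zero fun i hi => by
      have hai : a i = 0 :=
        ((ha (mem_Icc.1 hi).2).trans_eq hak).antisymm (ha0.symm.trans_le (ha i.zero_le))
      rw [hai, mul_zero]
    have hnorm := hf.dotProduct_self
    rw [hR.comp_dotProduct_comp ha0, hzero] at hnorm
    exact zero_ne_one hnorm
  · obtain ⟨j, rfl⟩ := hR.exists_eq hi hik
    have hj : ¬ IsBoundary (cometGraph n k) j :=
      hR.eq_zero_iff.not.1 (Nat.one_le_iff_ne_zero.1 hi)
    have heigen := hf.lapApply_eq hj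
    rw [lapApply_comp_cometRank hk (Nat.le_of_succ_le hkn) ha0 hj, Function.comp_apply] at heigen
    split_ifs at heigen ⊢ <;> linarith

lemma exists_isRanking_crossing_eq (hG : IsTreeWithBoundary G) (hk : 1 ≤ k) (hkn : k + 3 ≤ n)
    (hint : #(interiorFinset G) = k)
    (hbd : #(boundaryFinset G) = #(boundaryFinset (cometGraph n k)))
    (hle : dirichletLambda G ≤ dirichletLambda (cometGraph n k)) :
    ∃ r, IsRanking G k r ∧ ∀ p < k, ∀ q < k,
      crossing (cometGraph n k) (cometRank n k) p q = crossing G r p q := by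
  obtain ⟨r, a, hr, ha, ha0, hf⟩ := exists_isRanking_isRayleighMinimizer hG
  rw [hint] at hr
  have hkn' : k + 2 ≤ n := Nat.le_of_succ_le hkn
  have hC := cometGraph_isTreeWithBoundary hk hkn'
  have hR := isRanking_cometRank hk hkn'
  have hlower := hr.dirichletLambda_cometGraph_le_quadForm hk hkn' ha0 hf.dotProduct_self
  have hupper := (hr.quadForm_cometRank_le hG hk hkn' hbd ha).trans_eq hf.quadForm_eq
  have hground : IsRayleighMinimizer (cometGraph n k) (dirichletLambda (cometGraph n k))
      (a ∘ cometRank n k) :=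
    ⟨hR.comp_mem_dirichletSpace ha0,
      by rw [hR.comp_dotProduct_comp ha0, ← hr.comp_dotProduct_comp ha0, hf.dotProduct_self],
      (hupper.trans hle).antisymm hlower, fun h hh => dirichletLambda_mul_le_quadForm hC hh⟩
  have heq : quadForm (cometGraph n k) (a ∘ cometRank n k) = quadForm G (a ∘ r) := by
    rw [hground.quadForm_eq, hf.quadForm_eq]
    exact (hlower.trans hupper).antisymm hle
  exact ⟨r, hr, fun p hp q hq => hr.crossing_eq_of_quadForm_eq (a := a) hG hk hkn' hbd
    (fun i hi => hground.lt_succ_of_comp_cometRank hk hkn ha ha0 hi) heq hp hq⟩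

end GroundState

section Recognition

open SimpleGraph

variable {V W : Type*} [Fintype V] [Fintype W] {G : SimpleGraph V} {H : SimpleGraph W}
  {r : V → ℕ} {s : W → ℕ} {k p q : ℕ}

lemma nonempty_iso_of_connected_of_isTree {V W : Type*} {G : SimpleGraph V} {H : SimpleGraph W}
    (hG : G.Connected) (hH : H.IsTree) (e : V ≃ W)
    (he : ∀ u v, G.Adj u v → H.Adj (e u) (e v)) : Nonempty (G ≃g H) := by
  have hle : G ≤ H.comap e := fun u v huv => he u v huv
  have hmin := isTree_iff_minimal_connected.1 ((Iso.comap e H).isTree_iff.2 hH)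
  rw [hle.antisymm (hmin.2 hG hle)]
  exact ⟨Iso.comap e H⟩

lemma card_interedges_level_add (G : SimpleGraph V) (r : V → ℕ) (p q : ℕ) :
    #(G.interedges {v | r v < p + 1} {v | q ≤ r v}) +
        #(G.interedges {v | r v < p} {v | q + 1 ≤ r v}) =
      #(G.interedges {v | r v < p} {v | q ≤ r v}) +
        #(G.interedges {v | r v < p + 1} {v | q + 1 ≤ r v}) +
        #(G.interedges {v | r v = p} {v | r v = q}) := by
  have hcard (S T : ℕ → Prop) [DecidablePred S] [DecidablePred T] :
      #(G.interedges {v | S (r v)} {v | T (r v)}) =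
        ∑ u, ∑ v, if G.Adj u v ∧ S (r u) ∧ T (r v) then 1 else 0 := by
    rw [← Fintype.sum_prod_type' fun u v => if G.Adj u v ∧ S (r u) ∧ T (r v) then 1 else 0,
      sum_boole, Nat.cast_id]
    congr 1
    ext e
    simp only [mem_interedges_iff, mem_filter_univ]
    tauto
  rw [hcard (· < p + 1) (q ≤ ·), hcard (· < p) (q + 1 ≤ ·), hcard (· < p) (q ≤ ·),
    hcard (· < p + 1) (q + 1 ≤ ·), hcard (· = p) (· = q)]
  simp only [← sum_add_distrib]
  refine sum_congr rfl fun u _ => sum_congr rfl fun v _ => ?_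
  by_cases huv : G.Adj u v
  · simp only [huv, true_and]
    split_ifs <;> omega
  · simp only [huv, false_and, if_false]

lemma card_interedges_level_eq_of_crossing_eq (hr : ∀ v, r v ≤ k) (hs : ∀ w, s w ≤ k)
    (hcross : ∀ p < k, ∀ q < k, crossing G r p q = crossing H s p q) (hpq : p ≤ q) :
    #(G.interedges {v | r v < p} {v | q ≤ r v}) = #(H.interedges {w | s w < p} {w | q ≤ s w}) := by
  obtain _ | p := p
  · simp [interedges_def]
  obtain _ | q := q
  · omega
  obtain hq | hq := lt_or_ge q k
  · have h := hcross p (by omega) q hq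
    rw [crossing, crossing, min_eq_left (by omega), max_eq_right (by omega)] at h
    simpa only [Nat.lt_succ_iff, Nat.succ_le_iff] using h
  · have hr' (v : V) : ¬ q + 1 ≤ r v := by have := hr v; omega
    have hs' (w : W) : ¬ q + 1 ≤ s w := by have := hs w; omega
    simp [interedges_def, hr', hs']

lemma card_interedges_rank_eq_of_crossing_eq (hr : ∀ v, r v ≤ k) (hs : ∀ w, s w ≤ k)
    (hcross : ∀ p < k, ∀ q < k, crossing G r p q = crossing H s p q) (hpq : p < q) :
    #(G.interedges {v | r v = p} {v | r v = q}) = #(H.interedges {w | s w = p} {w | s w = q}) := by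
  have hG := card_interedges_level_add G r p q
  have hH := card_interedges_level_add H s p q
  have hlevel {i j : ℕ} (hij : i ≤ j) := card_interedges_level_eq_of_crossing_eq hr hs hcross hij
  rw [hlevel (i := p + 1) hpq, hlevel (j := q + 1) (by omega), hlevel hpq.le,
    hlevel (i := p + 1) (j := q + 1) (by omega)] at hG
  omega

/-- The rank of `v`, together with the rank of its neighbour if `v` is a boundary vertex; it
determines the place of `v` in `G` up to a permutation of the boundary vertices at each vertex. -/
def rankLabel (G : SimpleGraph V) (r : V → ℕ) (v : V) : ℕ × ℕ :=
  (r v, if r v = 0 then ∑ w ∈ G.neighborFinset v, r w else 0)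

lemma IsRanking.rankLabel_of_adj (hr : IsRanking G k r) {u v : V} (hu : r u = 0)
    (huv : G.Adj u v) : rankLabel G r u = (0, r v) := by
  have hnbr : G.neighborFinset u = {v} := by
    ext w
    rw [mem_neighborFinset, mem_singleton]
    exact ⟨fun huw => (hr.eq_zero_iff.1 hu).eq_of_adj huw huv, fun hwv => hwv ▸ huv⟩
  rw [rankLabel, hnbr, sum_singleton, hu, if_pos rfl]

lemma IsRanking.exists_adj_of_rankLabel_eq (hr : IsRanking G k r) {v : V}
    (hv : rankLabel G r v = (0, q)) : ∃ w, G.Adj v w ∧ r w = q := by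
  have hv0 : r v = 0 := congrArg Prod.fst hv
  obtain ⟨w, hw⟩ := (G.degree_pos_iff_exists_adj v).1 ((hr.eq_zero_iff.1 hv0).symm ▸ one_pos)
  rw [hr.rankLabel_of_adj hv0 hw] at hv
  exact ⟨w, hw, congrArg Prod.snd hv⟩

lemma IsRanking.ne_of_adj (hr : IsRanking G k r) (hG : IsTreeWithBoundary G) {u v : V}
    (huv : G.Adj u v) : r u ≠ r v := by
  intro heq
  by_cases hv : r v = 0
  · exact not_isBoundary_of_isInterior
      (hG.isInterior_of_adj (hr.eq_zero_iff.1 (heq.trans hv)) huv) (hr.eq_zero_iff.1 hv)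
  · exact huv.ne (hr.eq_of_eq heq hv)

lemma IsRanking.card_interedges_rank_self (hr : IsRanking G k r) (hG : IsTreeWithBoundary G)
    (p : ℕ) : #(G.interedges {v | r v = p} {v | r v = p}) = 0 := by
  rw [card_eq_zero, eq_empty_iff_forall_notMem]
  intro e he
  simp only [mem_interedges_iff, mem_filter_univ] at he
  exact hr.ne_of_adj hG he.2.2 (he.1.trans he.2.1.symm)

lemma IsRanking.card_filter_rank_eq (hr : IsRanking G k r) (hp : p ≠ 0) :
    #{v | r v = p} = if p ≤ k then 1 else 0 := by
  split_ifs with hpk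
  · obtain ⟨x, hx⟩ := hr.exists_eq (Nat.one_le_iff_ne_zero.2 hp) hpk
    rw [card_eq_one]
    refine ⟨x, ext fun v => ?_⟩
    rw [mem_filter_univ, mem_singleton]
    exact ⟨fun hv => hr.eq_of_eq (hv.trans hx.symm) (hx.trans_ne hp), fun hv => hv ▸ hx⟩
  · rw [card_eq_zero, filter_eq_empty_iff]
    rintro v - rfl
    exact hpk (hr.le v)

lemma IsRanking.card_filter_rankLabel_eq_zero (hr : IsRanking G k r) (q : ℕ) :
    #{v | rankLabel G r v = (0, q)} = #(G.interedges {v | r v = 0} {v | r v = q}) := by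
  refine (card_nbij Prod.fst ?_ ?_ ?_).symm
  · intro e he
    simp only [mem_coe, mem_interedges_iff, mem_filter_univ] at he ⊢
    rw [hr.rankLabel_of_adj he.1 he.2.2, he.2.1]
  · intro e he e' he' hee'
    simp only [mem_coe, mem_interedges_iff, mem_filter_univ] at he he'
    exact Prod.ext hee' ((hr.eq_zero_iff.1 he.1).eq_of_adj he.2.2 (hee' ▸ he'.2.2))
  · intro v hv
    rw [mem_coe, mem_filter_univ] at hv
    obtain ⟨w, hvw, hw⟩ := hr.exists_adj_of_rankLabel_eq hv
    refine ⟨(v, w), ?_, rfl⟩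
    simp only [mem_coe, mem_interedges_iff, mem_filter_univ]
    exact ⟨congrArg Prod.fst hv, hw, hvw⟩

lemma IsRanking.card_filter_rankLabel (hr : IsRanking G k r) (hp : p ≠ 0) :
    #{v | rankLabel G r v = (p, q)} = if p ≤ k ∧ q = 0 then 1 else 0 := by
  have hlabel (v : V) : rankLabel G r v = (p, q) ↔ r v = p ∧ q = 0 := by
    rw [rankLabel, Prod.mk.injEq]
    refine and_congr_right fun hv => ?_
    rw [if_neg (hv.trans_ne hp), eq_comm]
  simp only [hlabel]
  by_cases hq : q = 0
  · simp only [hq, and_true, hr.card_filter_rank_eq hp]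
  · simp [hq]

lemma IsRanking.card_filter_rankLabel_eq_of_crossing_eq (hr : IsRanking G k r)
    (hs : IsRanking H k s) (hG : IsTreeWithBoundary G) (hH : IsTreeWithBoundary H)
    (hcross : ∀ p < k, ∀ q < k, crossing G r p q = crossing H s p q) (c : ℕ × ℕ) :
    #{v | rankLabel G r v = c} = #{w | rankLabel H s w = c} := by
  obtain ⟨p, q⟩ := c
  obtain rfl | hp := eq_or_ne p 0
  · rw [hr.card_filter_rankLabel_eq_zero, hs.card_filter_rankLabel_eq_zero]
    obtain rfl | hq := q.eq_zero_or_pos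
    · rw [hr.card_interedges_rank_self hG, hs.card_interedges_rank_self hH]
    · exact card_interedges_rank_eq_of_crossing_eq hr.le hs.le hcross hq
  · rw [hr.card_filter_rankLabel hp, hs.card_filter_rankLabel hp]

lemma IsRanking.nonempty_iso_of_crossing_eq (hr : IsRanking G k r) (hs : IsRanking H k s)
    (hG : IsTreeWithBoundary G) (hH : IsTreeWithBoundary H)
    (hcross : ∀ p < k, ∀ q < k, crossing G r p q = crossing H s p q) : Nonempty (G ≃g H) := by
  have hfiber (c : ℕ × ℕ) :
      Fintype.card {v // rankLabel G r v = c} = Fintype.card {w // rankLabel H s w = c} := by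
    simpa only [Fintype.card_subtype] using
      hr.card_filter_rankLabel_eq_of_crossing_eq hs hG hH hcross c
  let e : V ≃ W := Equiv.ofFiberEquiv fun c => Fintype.equivOfCardEq (hfiber c)
  have hlabel (v : V) : rankLabel H s (e v) = rankLabel G r v := Equiv.ofFiberEquiv_map _ v
  have hrank (v : V) : s (e v) = r v := congrArg Prod.fst (hlabel v)
  have hadj {u v : V} (huv : G.Adj u v) (hlt : r u < r v) : H.Adj (e u) (e v) := by
    have hv : s (e v) ≠ 0 := by rw [hrank]; omega
    by_cases hu : r u = 0
    · obtain ⟨w, huw, hw⟩ := hs.exists_adj_of_rankLabel_eq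
        ((hlabel u).trans (hr.rankLabel_of_adj hu huv))
      rwa [← hs.eq_of_eq (hw.trans (hrank v).symm) hv]
    · have hpos : 0 < #(H.interedges {w | s w = r u} {w | s w = r v}) := by
        rw [← card_interedges_rank_eq_of_crossing_eq hr.le hs.le hcross hlt, card_pos]
        exact ⟨(u, v), by simp [mem_interedges_iff, huv]⟩
      obtain ⟨⟨x, y⟩, hxy⟩ := card_pos.1 hpos
      simp only [mem_interedges_iff, mem_filter_univ] at hxy
      rw [← hs.eq_of_eq (hxy.1.trans (hrank u).symm) (by rwa [hrank]),
        ← hs.eq_of_eq (hxy.2.1.trans (hrank v).symm) hv]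
      exact hxy.2.2
  refine nonempty_iso_of_connected_of_isTree hG.1.connected hH.1 e fun u v huv => ?_
  obtain hlt | hlt := (hr.ne_of_adj hG huv).lt_or_gt
  · exact hadj huv hlt
  · exact (hadj huv.symm hlt).symm

end Recognition

section Path

open SimpleGraph

variable {V : Type*} {G : SimpleGraph V}

lemma exists_adj_dist_eq (hG : G.Connected) {u v : V} {d : ℕ} (hd : G.dist u v = d + 1) :
    ∃ w, G.Adj w v ∧ G.dist u w = d := by
  obtain ⟨c, hc⟩ := hG.exists_walk_length_eq_dist v u
  rw [dist_comm, hd] at hc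
  cases c with
  | nil => simp at hc
  | @cons _ w _ hvw c =>
    rw [Walk.length_cons, Nat.add_right_cancel_iff] at hc
    have hupper := dist_le c
    have hlower := hG.dist_triangle (u := u) (v := w) (w := v)
    rw [dist_eq_one_iff_adj.2 hvw.symm] at hlower
    rw [dist_comm] at hupper
    exact ⟨w, hvw.symm, by omega⟩

variable [Fintype V] {u : V}

lemma eq_of_adj_of_dist_eq_add_one (hG : G.Connected) (hdeg : ∀ v, G.degree v ≤ 2)
    (hu : IsBoundary G u) {x v w : V} (hv : G.Adj x v) (hw : G.Adj x w)
    (hdv : G.dist u v = G.dist u x + 1) (hdw : G.dist u w = G.dist u x + 1) : v = w := by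
  by_contra hvw
  obtain hx | hx := eq_or_ne (G.dist u x) 0
  · rw [hG.dist_eq_zero_iff] at hx
    exact hvw ((hx ▸ hu).eq_of_adj hv hw)
  · obtain ⟨d, hd⟩ := Nat.exists_eq_succ_of_ne_zero hx
    obtain ⟨y, hyx, hy⟩ := exists_adj_dist_eq hG hd
    have hyv : y ≠ v := by rintro rfl; omega
    have hyw : y ≠ w := by rintro rfl; omega
    have hsub : {y, v, w} ⊆ G.neighborFinset x := by
      simp only [insert_subset_iff, singleton_subset_iff, mem_neighborFinset]
      exact ⟨hyx.symm, hv, hw⟩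
    have hcard := card_le_card hsub
    rw [card_eq_three.2 ⟨y, v, w, hyv, hyw, hvw, rfl⟩, card_neighborFinset_eq_degree] at hcard
    have := hdeg x
    omega

lemma dist_injective_of_degree_le_two (hG : G.Connected) (hdeg : ∀ v, G.degree v ≤ 2)
    (hu : IsBoundary G u) : Function.Injective (G.dist u) := by
  intro v w hvw
  generalize hd : G.dist u w = d at hvw
  induction d generalizing v w with
  | zero => rw [← hG.dist_eq_zero_iff.1 hvw, ← hG.dist_eq_zero_iff.1 hd]
  | succ d ih =>
    obtain ⟨x, hxv, hx⟩ := exists_adj_dist_eq hG hvw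
    obtain ⟨y, hyw, hy⟩ := exists_adj_dist_eq hG hd
    obtain rfl := ih hy hx
    exact eq_of_adj_of_dist_eq_add_one hG hdeg hu hxv hyw (by rw [hvw, hx]) (by rw [hd, hx])

lemma nonempty_iso_cometGraph_of_card_boundaryFinset_eq_two {k : ℕ} (hG : IsTreeWithBoundary G)
    (hk : 1 ≤ k) (hcard : Fintype.card V = k + 2) (hbd : #(boundaryFinset G) = 2) :
    Nonempty (G ≃g cometGraph (k + 2) k) := by
  obtain ⟨u, hu⟩ := hG.2.2
  have hconn := hG.1.connected
  have hinj : Function.Injective (G.dist u) :=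
    dist_injective_of_degree_le_two hconn (hG.degree_le_two hbd) hu
  have hlt (v : V) : G.dist u v < k + 2 := by
    obtain ⟨c, hc, hlen⟩ := hconn.exists_path_of_dist u v
    have := hc.length_lt
    rwa [hlen, hcard] at this
  let pos (v : V) : Fin (k + 2) := ⟨G.dist u v, hlt v⟩
  have hpos : Function.Bijective pos := (Fintype.bijective_iff_injective_and_card pos).2
    ⟨fun v w hvw => hinj (Fin.mk.inj hvw), hcard.trans (Fintype.card_fin _).symm⟩
  refine nonempty_iso_of_connected_of_isTree hconn (cometGraph_isTree hk (Nat.succ_pos _))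
    (Equiv.ofBijective pos hpos) fun v w hvw => (cometGraph_adj hk).2 ?_
  simp only [Equiv.ofBijective_apply, pos]
  have := hlt v
  have := hlt w
  have := hG.1.dist_eq_dist_add_one_of_adj u hvw
  omega

end Path

section FaberKrahn

variable {n k : ℕ}

lemma cometGraph_inClassT (hk : 1 ≤ k) (hkn : k + 2 ≤ n) : inClassT k (cometGraph n k) :=
  ⟨cometGraph_isTreeWithBoundary hk hkn, card_interiorFinset_cometGraph hk hkn⟩

lemma inClassT.card_boundaryFinset {G : SimpleGraph (Fin n)} (hG : inClassT k G) :
    #(boundaryFinset G) + k = n := by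
  rw [← hG.2, hG.1.card_boundaryFinset_add, Fintype.card_fin]

lemma inClassT.add_two_le {G : SimpleGraph (Fin n)} (hG : inClassT k G) : k + 2 ≤ n := by
  have h1 := hG.card_boundaryFinset
  have h2 := hG.1.two_le_card_boundaryFinset
  omega

lemma inClassT.dirichletLambda_cometGraph_le {G : SimpleGraph (Fin n)} (hk : 1 ≤ k)
    (hG : inClassT k G) : dirichletLambda (cometGraph n k) ≤ dirichletLambda G := by
  have hbd := hG.card_boundaryFinset
  have hbdC := (cometGraph_inClassT hk hG.add_two_le).card_boundaryFinset
  exact FK.dirichletLambda_cometGraph_le hG.1 hk hG.add_two_le hG.2 (by omega)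

lemma inClassT.nonempty_iso_cometGraph {G : SimpleGraph (Fin n)} (hk : 1 ≤ k)
    (hG : inClassT k G) (hle : dirichletLambda G ≤ dirichletLambda (cometGraph n k)) :
    Nonempty (G ≃g cometGraph n k) := by
  have hbd := hG.card_boundaryFinset
  have hbdC := (cometGraph_inClassT hk hG.add_two_le).card_boundaryFinset
  obtain rfl | hkn : k + 2 = n ∨ k + 3 ≤ n := hG.add_two_le.eq_or_lt
  · exact nonempty_iso_cometGraph_of_card_boundaryFinset_eq_two hG.1 hk (Fintype.card_fin _)
      (by omega)
  · obtain ⟨r, hr, hcross⟩ :=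
      exists_isRanking_crossing_eq hG.1 hk hkn hG.2 (by omega) hle
    exact hr.nonempty_iso_of_crossing_eq (isRanking_cometRank hk (by omega)) hG.1
      (cometGraph_isTreeWithBoundary hk (by omega)) fun p hp q hq => (hcross p hp q hq).symm

end FaberKrahn

/-- **Theorem 1 (Klobürsteltheorem).** A tree `G` has the Faber-Krahn property
in the class `T^(n,k)` if and only if `G` is a comet; `G` is then uniquely
determined up to isomorphism. -/
theorem faberKrahn_comet (n k : ℕ) (hk1 : 1 ≤ k) (hkn : k + 1 ≤ n)
    (G : SimpleGraph (Fin n)) (hG : inClassT k G) :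
    (∀ G' : SimpleGraph (Fin n), inClassT k G' →
        dirichletLambda G ≤ dirichletLambda G')
      ↔ Nonempty (G ≃g cometGraph n k) := by
  refine ⟨fun hmin => hG.nonempty_iso_cometGraph hk1 ?_, fun ⟨e⟩ G' hG' => ?_⟩
  · exact hmin _ (cometGraph_inClassT hk1 hG.add_two_le)
  · rw [dirichletLambda_eq_of_iso e]
    exact hG'.dirichletLambda_cometGraph_le hk1

end FK
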